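/- Let $U:(0,\infty)\to(0,\infty)$ be measurable and such that, for some $\kappa\in\mathbb{R}$, the function $x\mapsto x^{\kappa}U(x)$ is locally bounded on $[0,\infty)$, that is, bounded on $(0,b]$ for every $b>0$ (for $\kappa=0$ this says that $U$ itself is locally bounded on $[0,\infty)$). Suppose that $U(x)\sim x^{\beta}\ell(x)$ as $x\to\infty$ for some $\beta\in\mathbb{R}$ and some function $\ell:(0,\infty)\to(0,\infty)$ slowly varying at infinity, i.e. $\ell(ct)/\ell(t)\to1$ as $t\to\infty$ for every $c>0$. Let $q$ be a function, defined and positive in a neighbourhood of infinity, with $q(t)\to\infty$ and $q(t)/t\to0$ as $t\to\infty$. Then the integral below converges for all sufficiently large $t$ and, as $t\to\infty$, $$\int_0^\infty y^{q(t)-1}e^{-y}\,U(t/y)\,\mathrm{d}y\;\sim\;\Gamma(q(t))\,U(t/q(t)),$$ where $\Gamma$ is the Gamma function and $f(t)\sim g(t)$ means $f(t)/g(t)\to1$. -/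

import Mathlib

open Filter Topology MeasureTheory Set

/-- `ℓ : (0,∞) → (0,∞)` is slowly varying at infinity. Only the values of `ℓ` on `(0,∞)` matter. -/
structure SlowlyVaryingAtTop (ℓ : ℝ → ℝ) : Prop where
  pos : ∀ x : ℝ, 0 < x → 0 < ℓ x
  tendsto_ratio : ∀ c : ℝ, 0 < c → Tendsto (fun t => ℓ (c * t) / ℓ t) atTop (𝓝 1)

/-- The class `𝒬` of functions, positive in a neighbourhood of infinity, with `q(t) → ∞` and
`q(t) = o(t)` as `t → ∞`. -/
structure ClassQ (q : ℝ → ℝ) : Prop where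
  eventually_pos : ∀ᶠ t in atTop, 0 < q t
  tendsto_atTop : Tendsto q atTop atTop
  tendsto_div : Tendsto (fun t => q t / t) atTop (𝓝 0)

/-- A function on `(0,∞)` is locally bounded on `[0,∞)`: it is bounded on `(0,b]` for all `b`. -/
def LocallyBoundedFromZero (f : ℝ → ℝ) : Prop :=
  ∀ b : ℝ, 0 < b → ∃ C : ℝ, ∀ x ∈ Ioc 0 b, |f x| ≤ C

/-- Uniform convergence theorem for measurable additively slowly varying functions. -/
theorem uniform_of_tendsto_add_sub {h : ℝ → ℝ} (hm : Measurable h)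
    (hh : ∀ u : ℝ, Tendsto (fun x => h (x + u) - h x) atTop (𝓝 0)) {ε : ℝ} (hε : 0 < ε) :
    ∃ X : ℝ, ∀ x, X ≤ x → ∀ u ∈ Icc (0 : ℝ) 1, |h (x + u) - h x| ≤ ε := by
  let d : ℝ → ℝ := fun a => min 1 |a|
  have d_nonneg : ∀ a, 0 ≤ d a := fun a => le_min zero_le_one (abs_nonneg a)
  have d_meas : Measurable d := by fun_prop
  have d_add : ∀ a b, d (a - b) ≤ d a + d b := by
    intro a b
    have := abs_sub a b
    have ha := abs_nonneg a
    have hb := abs_nonneg b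
    simp only [d]
    rcases min_cases 1 |a - b| with h1 | h1 <;> rcases min_cases 1 |a| with h2 | h2 <;>
      rcases min_cases 1 |b| with h3 | h3 <;> linarith
  have d_int : ∀ (g : ℝ → ℝ), Measurable g → ∀ a b : ℝ,
      IntervalIntegrable (fun z => d (g z)) volume a b := by
    intro g hg a b
    refine (intervalIntegrable_const (c := (1 : ℝ))).mono_fun
      (d_meas.comp hg).aestronglyMeasurable (Eventually.of_forall fun z => ?_)
    simp only [Real.norm_eq_abs, abs_one]
    rw [abs_of_nonneg (d_nonneg _)]
    exact min_le_left _ _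
  have key : Tendsto (fun x => ∫ z in (0 : ℝ)..2, d (h (x + z) - h x)) atTop (𝓝 0) := by
    have := intervalIntegral.tendsto_integral_filter_of_dominated_convergence
      (μ := volume) (a := 0) (b := 2) (l := (atTop : Filter ℝ))
      (F := fun x z => d (h (x + z) - h x)) (f := fun _ => 0) (fun _ => 1)
      (Eventually.of_forall fun x => by
        apply Measurable.aestronglyMeasurable
        exact d_meas.comp (by fun_prop))
      (Eventually.of_forall fun x => Eventually.of_forall fun z _ => by
        rw [Real.norm_eq_abs, abs_of_nonneg (d_nonneg _)]
        exact min_le_left _ _)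
      intervalIntegrable_const
      (Eventually.of_forall fun z _ => by
        have hd : Continuous d := by fun_prop
        have := (hd.tendsto 0).comp (hh z)
        simpa [d, Function.comp_def] using this)
    simpa using this
  have hη : 0 < min ε (1 / 2) / 2 := by positivity
  obtain ⟨X, hX⟩ := eventually_atTop.1 (key.eventually (gt_mem_nhds hη))
  refine ⟨X, fun x hx u hu => ?_⟩
  have h1 := hX x hx
  have h2 := hX (x + u) (by linarith [hu.1])
  have e1 : (∫ z in (1 : ℝ)..2, d (h (x + z) - h x)) ≤ ∫ z in (0 : ℝ)..2, d (h (x + z) - h x) :=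
    intervalIntegral.integral_mono_interval (by norm_num) (by norm_num) le_rfl
      (Eventually.of_forall fun z => d_nonneg _) (d_int _ (by fun_prop) _ _)
  have e2 : (∫ z in (1 : ℝ)..2, d (h (x + z) - h (x + u)))
      ≤ ∫ z in (0 : ℝ)..2, d (h (x + u + z) - h (x + u)) := by
    have : (∫ z in (1 : ℝ)..2, d (h (x + z) - h (x + u)))
        = ∫ z in (1 - u)..(2 - u), d (h (x + u + z) - h (x + u)) := by
      rw [← intervalIntegral.integral_comp_sub_right
        (fun z => d (h (x + u + z) - h (x + u))) u]
      refine intervalIntegral.integral_congr fun z _ => ?_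
      exact congrArg (fun a => d (h a - h (x + u))) (by ring)
    rw [this]
    exact intervalIntegral.integral_mono_interval (by linarith [hu.2]) (by linarith)
      (by linarith [hu.1]) (Eventually.of_forall fun z => d_nonneg _) (d_int _ (by fun_prop) _ _)
  have e3 : d (h (x + u) - h x) ≤ (∫ z in (1 : ℝ)..2, d (h (x + z) - h x))
      + ∫ z in (1 : ℝ)..2, d (h (x + z) - h (x + u)) := by
    rw [← intervalIntegral.integral_add (d_int _ (by fun_prop) _ _) (d_int _ (by fun_prop) _ _)]
    calc d (h (x + u) - h x) = ∫ _z in (1 : ℝ)..2, d (h (x + u) - h x) := by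
          rw [intervalIntegral.integral_const]; norm_num
      _ ≤ _ := by
          refine intervalIntegral.integral_mono_on (by norm_num) intervalIntegrable_const
            ((d_int _ (by fun_prop) _ _).add (d_int _ (by fun_prop) _ _)) fun z _ => ?_
          have := d_add (h (x + z) - h x) (h (x + z) - h (x + u))
          simpa using this
  have e4 : d (h (x + u) - h x) < min ε (1 / 2) := by linarith
  have e5 : min ε (1 / 2 : ℝ) ≤ 1 / 2 := min_le_right _ _
  have e6 : min ε (1 / 2 : ℝ) ≤ ε := min_le_left _ _
  rcases min_cases 1 |h (x + u) - h x| with h3 | h3 <;> simp only [d] at e4 <;> linarith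

/-- A function with oscillation at most `1` on unit intervals grows at most linearly. -/
theorem abs_sub_le_abs_sub_add_one {h : ℝ → ℝ} {X : ℝ}
    (hX : ∀ x, X ≤ x → ∀ u ∈ Icc (0 : ℝ) 1, |h (x + u) - h x| ≤ 1) {x y : ℝ}
    (hx : X ≤ x) (hy : X ≤ y) : |h x - h y| ≤ |x - y| + 1 := by
  have step : ∀ n : ℕ, ∀ z, X ≤ z → |h (z + n) - h z| ≤ n := by
    intro n
    induction n with
    | zero => intro z _; simp
    | succ n ih =>
      intro z hz
      have h1 := ih z hz
      have h2 := hX (z + n) (by linarith [(Nat.cast_nonneg n : (0 : ℝ) ≤ n)]) 1 (by simp)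
      push_cast
      rw [← add_assoc]
      have := abs_sub_le (h (z + n + 1)) (h (z + n)) (h z)
      linarith
  have main : ∀ a b, X ≤ a → a ≤ b → |h b - h a| ≤ (b - a) + 1 := by
    intro a b ha hab
    have hf := Nat.floor_le (sub_nonneg.2 hab)
    have hl := Nat.lt_floor_add_one (b - a)
    set n := ⌊b - a⌋₊
    have h1 := step n a ha
    have h2 := hX (a + n) (by linarith [(Nat.cast_nonneg n : (0 : ℝ) ≤ n)]) (b - a - n)
      ⟨by linarith, by linarith⟩
    rw [show a + n + (b - a - n) = b by ring] at h2
    have := abs_sub_le (h b) (h (a + n)) (h a)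
    linarith
  rcases le_total x y with hxy | hxy
  · rw [abs_sub_comm, abs_sub_comm x, abs_of_nonneg (sub_nonneg.2 hxy)]
    exact main x y hx hxy
  · rw [abs_of_nonneg (sub_nonneg.2 hxy)]
    exact main y x hy hxy

/-- `Γ(q + k) ∼ Γ(q) q ^ k` as `q → ∞`, for integer `k`. -/
theorem tendsto_Gamma_add_int_div (k : ℤ) :
    Tendsto (fun q : ℝ => Real.Gamma (q + k) / (Real.Gamma q * q ^ k)) atTop (𝓝 1) := by
  have ratio : ∀ k : ℤ, Tendsto (fun q : ℝ => (q + k) / q) atTop (𝓝 1) := by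
    intro k
    have : Tendsto (fun q : ℝ => 1 + (k : ℝ) / q) atTop (𝓝 (1 + 0)) :=
      tendsto_const_nhds.add (tendsto_const_nhds.div_atTop tendsto_id)
    rw [add_zero] at this
    refine this.congr' ?_
    filter_upwards [eventually_gt_atTop 0] with q hq
    field_simp
  have succ : ∀ k : ℤ, ∀ᶠ q : ℝ in atTop, Real.Gamma (q + (k + 1 : ℤ)) /
      (Real.Gamma q * q ^ (k + 1)) = Real.Gamma (q + k) / (Real.Gamma q * q ^ k) * ((q + k) / q) := by
    intro k
    filter_upwards [eventually_gt_atTop 0, eventually_gt_atTop (-(k : ℝ))] with q hq hqk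
    push_cast
    rw [← add_assoc, Real.Gamma_add_one (by linarith), zpow_add_one₀ hq.ne']
    have := (Real.Gamma_pos_of_pos hq).ne'
    have := (zpow_pos hq k).ne'
    field_simp
  induction k with
  | zero =>
    refine tendsto_const_nhds.congr' ?_
    filter_upwards [eventually_gt_atTop 0] with q hq
    simp [(Real.Gamma_pos_of_pos hq).ne']
  | succ k ih =>
    have := ih.mul (ratio k)
    rw [one_mul] at this
    exact this.congr' ((succ k).mono fun q hq => hq.symm)
  | pred k ih =>
    have := ih.div (ratio (-k - 1)) one_ne_zero
    rw [div_one] at this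
    refine this.congr' ?_
    filter_upwards [succ (-k - 1), eventually_gt_atTop 0, eventually_gt_atTop ((k : ℝ) + 1)]
      with q hq h0 h1
    rw [sub_add_cancel] at hq
    rw [Pi.div_apply, hq, mul_div_cancel_right₀]
    refine div_ne_zero ?_ h0.ne'
    push_cast
    linarith

/-- The Gamma weight multiplied by an integer power of `y / q`. -/
theorem gamma_weight_mul_zpow {q y : ℝ} (hy : 0 < y) (k : ℤ) :
    y ^ (q - 1) * Real.exp (-y) * (y / q) ^ k
      = (Real.exp (-y) * y ^ (q + k - 1)) / q ^ k := by
  rw [show q + k - 1 = q - 1 + k by ring, Real.rpow_add hy, Real.rpow_intCast, div_zpow]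
  ring

theorem integrableOn_gamma_weight_mul_zpow {q : ℝ} {k : ℤ} (hqk : 0 < q + k) :
    IntegrableOn (fun y => y ^ (q - 1) * Real.exp (-y) * (y / q) ^ k) (Ioi (0 : ℝ)) :=
  IntegrableOn.congr_fun ((Real.GammaIntegral_convergent hqk).div_const (q ^ k))
    (fun _ hy => (gamma_weight_mul_zpow hy k).symm) measurableSet_Ioi

theorem integral_gamma_weight_mul_zpow {q : ℝ} {k : ℤ} (hqk : 0 < q + k) :
    ∫ y in Ioi (0 : ℝ), y ^ (q - 1) * Real.exp (-y) * (y / q) ^ k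
      = Real.Gamma (q + k) / q ^ k := by
  rw [Real.Gamma_eq_integral hqk, ← integral_div]
  exact setIntegral_congr_fun measurableSet_Ioi fun _ hy => gamma_weight_mul_zpow hy k

theorem exp_mul_abs_log_le {v a : ℝ} (hv : 0 < v) {N : ℕ} (haN : a ≤ N) :
    Real.exp (a * |Real.log v|) ≤ v ^ N + (v ^ N)⁻¹ := by
  have hpos : 0 < v ^ N := pow_pos hv N
  have h1 : Real.exp (a * |Real.log v|) ≤ Real.exp (N * |Real.log v|) := by gcongr
  have h2 : Real.exp (N * Real.log v) = v ^ N := by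
    rw [Real.exp_nat_mul, Real.exp_log hv]
  refine h1.trans ?_
  rcases abs_cases (Real.log v) with h | h <;> rw [h.1]
  · rw [h2]; linarith [inv_pos.2 hpos]
  · rw [mul_neg, Real.exp_neg, h2]; linarith

/-- Global domination and local uniform convergence for the ratios of a regularly varying
function: a Potter type bound that holds for all `v > 0`. -/
theorem exists_abs_ratio_sub_one_le {U : ℝ → ℝ} {β κ : ℝ}
    (hU_pos : ∀ x : ℝ, 0 < x → 0 < U x)
    (hU_meas : Measurable (fun x : Ioi (0 : ℝ) => U x))
    (hU_bdd : LocallyBoundedFromZero (fun x => x ^ κ * U x))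
    (hU : ∀ c : ℝ, 0 < c → Tendsto (fun x => U (c * x) / U x) atTop (𝓝 (c ^ β)))
    {ε : ℝ} (hε : 0 < ε) :
    ∃ (K : ℝ) (N : ℕ) (s₀ : ℝ), ∀ s, s₀ ≤ s → ∀ v, 0 < v →
      |U (s / v) / U s - 1| ≤ ε + K * ((v - 1) ^ 2 * (v ^ N + (v ^ N)⁻¹)) := by
  let h : ℝ → ℝ := fun x => Real.log (U (Real.exp x)) - β * x
  have hlog : ∀ x, 0 < x → Real.log (U x) = h (Real.log x) + β * Real.log x := by
    intro x hx
    simp [h, Real.exp_log hx]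
  have h_meas : Measurable h := by
    have : Measurable fun x : ℝ => U (Real.exp x) :=
      hU_meas.comp (g := fun x : Ioi (0 : ℝ) => U x)
        (f := fun x : ℝ => (⟨Real.exp x, Real.exp_pos x⟩ : Ioi (0 : ℝ)))
        (Real.measurable_exp.subtype_mk)
    exact (Real.measurable_log.comp this).sub (by fun_prop)
  have h_slow : ∀ u : ℝ, Tendsto (fun x => h (x + u) - h x) atTop (𝓝 0) := by
    intro u
    have h1 := (hU (Real.exp u) (Real.exp_pos u)).comp Real.tendsto_exp_atTop
    have h2 := (h1.log (by positivity)).sub_const (β * u)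
    rw [Real.log_rpow (Real.exp_pos u), Real.log_exp, sub_self] at h2
    refine h2.congr fun x => ?_
    simp only [Function.comp_apply, h]
    rw [Real.log_div (hU_pos _ (by positivity)).ne' (hU_pos _ (by positivity)).ne', add_comm x,
      Real.exp_add]
    ring
  -- the global upper bound
  obtain ⟨X₁, hX₁⟩ := uniform_of_tendsto_add_sub h_meas h_slow one_pos
  set X := max X₁ 0 with hXdef
  have hX0 : 0 ≤ X := le_max_right _ _
  have hlin : ∀ {x y}, X ≤ x → X ≤ y → |h x - h y| ≤ |x - y| + 1 :=
    abs_sub_le_abs_sub_add_one fun x hx => hX₁ x ((le_max_left _ _).trans hx)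
  obtain ⟨C, hC⟩ := hU_bdd (Real.exp X) (Real.exp_pos X)
  have hCpos : 0 < C :=
    lt_of_lt_of_le (abs_pos.2 (mul_pos (by positivity) (hU_pos _ (Real.exp_pos X))).ne')
      (hC (Real.exp X) ⟨Real.exp_pos X, le_rfl⟩)
  obtain ⟨N, hN⟩ := exists_nat_ge (2 * |κ| + 2 * |β| + 1)
  set D := |Real.log C| + |κ| * X + |h X| + |β| * X + 1 with hD
  have hfar : ∀ s, Real.exp X ≤ s → ∀ v, 0 < v →
      U (s / v) / U s ≤ Real.exp D * (v ^ N + (v ^ N)⁻¹) := by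
    intro s hs v hv
    have hs0 : 0 < s := (Real.exp_pos X).trans_le hs
    have hsv : 0 < s / v := div_pos hs0 hv
    have hXs : X ≤ Real.log s := (Real.le_log_iff_exp_le hs0).2 hs
    have hlsv : Real.log (s / v) = Real.log s - Real.log v := Real.log_div hs0.ne' hv.ne'
    have hR : 0 < U (s / v) / U s := div_pos (hU_pos _ hsv) (hU_pos _ hs0)
    have hκ := abs_nonneg κ
    have hβ := abs_nonneg β
    have hw := abs_nonneg (Real.log v)
    have hlogR : Real.log (U (s / v) / U s) = Real.log (U (s / v)) - Real.log (U s) :=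
      Real.log_div (hU_pos _ hsv).ne' (hU_pos _ hs0).ne'
    have hbw : -(β * Real.log v) ≤ |β| * |Real.log v| := by
      rw [← abs_mul]; exact neg_le_abs _
    suffices hs : Real.log (U (s / v) / U s)
        ≤ D + (2 * |κ| + 2 * |β| + 1) * |Real.log v| by
      calc U (s / v) / U s = Real.exp (Real.log (U (s / v) / U s)) := (Real.exp_log hR).symm
        _ ≤ Real.exp (D + (2 * |κ| + 2 * |β| + 1) * |Real.log v|) := Real.exp_le_exp.2 hs
        _ = Real.exp D * Real.exp ((2 * |κ| + 2 * |β| + 1) * |Real.log v|) := Real.exp_add _ _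
        _ ≤ _ := by gcongr; exact exp_mul_abs_log_le hv hN
    have p1 : 0 ≤ |κ| * |Real.log v| := by positivity
    have p2 : 0 ≤ |β| * |Real.log v| := by positivity
    have p3 : 0 ≤ |κ| * X := by positivity
    have p4 : 0 ≤ |β| * X := by positivity
    have p5 := abs_nonneg (Real.log C)
    have p6 := abs_nonneg (h X)
    rcases le_total X (Real.log s - Real.log v) with hc | hc
    · have h1 := (le_abs_self _).trans (hlin hc hXs)
      rw [show Real.log s - Real.log v - Real.log s = -Real.log v by ring, abs_neg] at h1
      rw [hlogR, hlog _ hsv, hlog _ hs0, hlsv]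
      nlinarith
    · have hle : s / v ≤ Real.exp X := by
        rw [← hlsv] at hc
        exact (Real.log_le_iff_le_exp hsv).1 hc
      have h1 := (le_abs_self _).trans (hC (s / v) ⟨hsv, hle⟩)
      have h2 := Real.log_le_log (mul_pos (by positivity) (hU_pos _ hsv)) h1
      rw [Real.log_mul (by positivity) (hU_pos _ hsv).ne', Real.log_rpow hsv, hlsv] at h2
      have h3 := (le_abs_self _).trans (hlin (le_refl X) hXs)
      rw [abs_sub_comm, abs_of_nonneg (sub_nonneg.2 hXs)] at h3
      have hwpos : 0 ≤ Real.log v := by linarith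
      have h4 : -(κ * (Real.log s - Real.log v)) ≤ |κ| * (2 * |Real.log v| + X) := by
        refine (neg_le_abs _).trans ?_
        rw [abs_mul]
        gcongr
        rw [abs_of_nonneg hwpos, abs_le]
        constructor <;> linarith
      have h5 : -(β * Real.log s) ≤ |β| * (|Real.log v| + X) := by
        refine (neg_le_abs _).trans ?_
        rw [abs_mul]
        gcongr
        rw [abs_of_nonneg hwpos, abs_le]
        constructor <;> linarith
      have h6 := le_abs_self (Real.log C)
      have h7 := neg_le_abs (h X)
      rw [hlogR, hlog _ hs0, hD]
      rw [abs_of_nonneg hwpos] at *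
      nlinarith
  -- uniform convergence near `v = 1`
  obtain ⟨ρ, hρ, hρε⟩ := Metric.continuousAt_iff.1 (Real.continuous_exp.continuousAt (x := 0)) ε hε
  obtain ⟨Y, hY⟩ := uniform_of_tendsto_add_sub h_meas h_slow (half_pos hρ)
  have hcont : ContinuousAt (fun v : ℝ => |β| * |Real.log v| + |Real.log v|) 1 := by
    have := Real.continuousAt_log one_ne_zero
    fun_prop
  have hmin : 0 < min (ρ / 2) 1 := by positivity
  obtain ⟨δ, hδ, hδ'⟩ := Metric.continuousAt_iff.1 hcont _ hmin
  have hnear : ∀ s, Real.exp (Y + 1) ≤ s → ∀ v, 0 < v → |v - 1| < δ →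
      |U (s / v) / U s - 1| ≤ ε := by
    intro s hs v hv hvδ
    have hs0 : 0 < s := (Real.exp_pos _).trans_le hs
    have hsv : 0 < s / v := div_pos hs0 hv
    have hYs : Y + 1 ≤ Real.log s := (Real.le_log_iff_exp_le hs0).2 hs
    have hlsv : Real.log (s / v) = Real.log s - Real.log v := Real.log_div hs0.ne' hv.ne'
    have hR : 0 < U (s / v) / U s := div_pos (hU_pos _ hsv) (hU_pos _ hs0)
    have hβw : 0 ≤ |β| * |Real.log v| := by positivity
    have hw := abs_nonneg (Real.log v)
    have h1 := hδ' (show dist v 1 < δ by rwa [Real.dist_eq])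
    simp only [Real.dist_eq, Real.log_one, abs_zero, mul_zero, add_zero, sub_zero] at h1
    rw [abs_of_nonneg (by positivity)] at h1
    have h2 := h1.trans_le (min_le_left _ _)
    have h3 := h1.trans_le (min_le_right _ _)
    have hw1 : |Real.log v| ≤ 1 := by linarith
    have hosc : |h (Real.log s - Real.log v) - h (Real.log s)| ≤ ρ / 2 := by
      rcases le_total 0 (Real.log v) with hc | hc
      · rw [abs_of_nonneg hc] at hw1
        have := hY (Real.log s - Real.log v) (by linarith) (Real.log v) ⟨hc, hw1⟩
        rwa [sub_add_cancel, abs_sub_comm] at this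
      · rw [abs_of_nonpos hc] at hw1
        exact hY (Real.log s) (by linarith) (-Real.log v) ⟨by linarith, hw1⟩
    have hlogR : Real.log (U (s / v) / U s)
        = h (Real.log s - Real.log v) - h (Real.log s) - β * Real.log v := by
      rw [Real.log_div (hU_pos _ hsv).ne' (hU_pos _ hs0).ne', hlog _ hsv, hlog _ hs0, hlsv]
      ring
    have hsmall : |Real.log (U (s / v) / U s)| < ρ := by
      rw [hlogR]
      refine (abs_sub _ _).trans_lt ?_
      rw [abs_mul]
      linarith
    have := hρε (show dist (Real.log (U (s / v) / U s)) 0 < ρ by simpa [Real.dist_eq] using hsmall)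
    rw [Real.exp_log hR, Real.exp_zero, Real.dist_eq] at this
    exact this.le
  refine ⟨(Real.exp D + 1) / δ ^ 2, N, max (Real.exp X) (Real.exp (Y + 1)), fun s hs v hv => ?_⟩
  have hs1 := (le_max_left _ _).trans hs
  have hs2 := (le_max_right _ _).trans hs
  have hs0 : 0 < s := (Real.exp_pos X).trans_le hs1
  have hS : 0 < v ^ N + (v ^ N)⁻¹ := by positivity
  by_cases hvδ : |v - 1| < δ
  · have : 0 ≤ (Real.exp D + 1) / δ ^ 2 * ((v - 1) ^ 2 * (v ^ N + (v ^ N)⁻¹)) := by positivity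
    linarith [hnear s hs2 v hv hvδ]
  · have hsq : δ ^ 2 ≤ (v - 1) ^ 2 := by
      rw [← sq_abs (v - 1)]
      exact pow_le_pow_left₀ hδ.le (not_lt.1 hvδ) 2
    have h1 : 1 ≤ v ^ N + (v ^ N)⁻¹ := by
      have := exp_mul_abs_log_le hv (a := 0) (N := N) (Nat.cast_nonneg N)
      simpa using this
    have hR : 0 < U (s / v) / U s := div_pos (hU_pos _ (div_pos hs0 hv)) (hU_pos _ hs0)
    have h2 : |U (s / v) / U s - 1| ≤ (Real.exp D + 1) * (v ^ N + (v ^ N)⁻¹) := by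
      have := hfar s hs1 v hv
      rw [abs_le]
      constructor <;> nlinarith [Real.exp_pos D]
    have h3 : (Real.exp D + 1) * (v ^ N + (v ^ N)⁻¹)
        ≤ (Real.exp D + 1) / δ ^ 2 * ((v - 1) ^ 2 * (v ^ N + (v ^ N)⁻¹)) := by
      calc (Real.exp D + 1) * (v ^ N + (v ^ N)⁻¹)
          = (Real.exp D + 1) / δ ^ 2 * (δ ^ 2 * (v ^ N + (v ^ N)⁻¹)) := by field_simp
        _ ≤ _ := by gcongr
    linarith

/-- Concentration of the Gamma law: `(y / q - 1) ^ 2` weighted by an integer power of `y / q` is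
eventually integrable, with expectation tending to zero. -/
theorem gamma_weighted_second_moment (k : ℤ) :
    (∀ᶠ q : ℝ in atTop, IntegrableOn
      (fun y => y ^ (q - 1) * Real.exp (-y) * ((y / q - 1) ^ 2 * (y / q) ^ k)) (Ioi (0 : ℝ))) ∧
    Tendsto (fun q : ℝ => (∫ y in Ioi (0 : ℝ),
      y ^ (q - 1) * Real.exp (-y) * ((y / q - 1) ^ 2 * (y / q) ^ k)) / Real.Gamma q)
      atTop (𝓝 0) := by
  let F : ℝ → ℤ → ℝ → ℝ := fun q j y => y ^ (q - 1) * Real.exp (-y) * (y / q) ^ j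
  have expand : ∀ q : ℝ, 0 < q → EqOn (fun y => F q (k + 1 + 1) y - 2 * F q (k + 1) y + F q k y)
      (fun y => y ^ (q - 1) * Real.exp (-y) * ((y / q - 1) ^ 2 * (y / q) ^ k)) (Ioi 0) := by
    intro q hq y hy
    have hv : y / q ≠ 0 := (div_pos hy hq).ne'
    simp only [F]
    rw [zpow_add_one₀ hv, zpow_add_one₀ hv]
    ring
  have large : ∀ᶠ q : ℝ in atTop, 0 < q ∧ 0 < q + k := by
    filter_upwards [eventually_gt_atTop 0, eventually_gt_atTop (-(k : ℝ))] with q h1 h2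
    exact ⟨h1, by linarith⟩
  have int : ∀ q : ℝ, 0 < q + k → IntegrableOn (F q k) (Ioi 0) ∧
      IntegrableOn (F q (k + 1)) (Ioi 0) ∧ IntegrableOn (F q (k + 1 + 1)) (Ioi 0) := by
    intro q hq
    refine ⟨integrableOn_gamma_weight_mul_zpow hq, integrableOn_gamma_weight_mul_zpow ?_,
      integrableOn_gamma_weight_mul_zpow ?_⟩ <;> push_cast <;> linarith
  constructor
  · filter_upwards [large] with q hq
    obtain ⟨i0, i1, i2⟩ := int q hq.2
    exact IntegrableOn.congr_fun ((i2.sub (i1.const_mul 2)).add i0) (expand q hq.1)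
      measurableSet_Ioi
  · have lim := ((tendsto_Gamma_add_int_div (k + 1 + 1)).sub
      ((tendsto_Gamma_add_int_div (k + 1)).const_mul 2)).add (tendsto_Gamma_add_int_div k)
    rw [show (1 : ℝ) - 2 * 1 + 1 = 0 by norm_num] at lim
    refine lim.congr' ?_
    filter_upwards [large] with q hq
    obtain ⟨i0, i1, i2⟩ := int q hq.2
    have i12 : IntegrableOn (fun y => F q (k + 1 + 1) y - 2 * F q (k + 1) y) (Ioi 0) :=
      i2.sub (i1.const_mul 2)
    rw [← setIntegral_congr_fun measurableSet_Ioi (expand q hq.1),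
      integral_add i12 i0, integral_sub i2 (i1.const_mul 2),
      integral_const_mul, integral_gamma_weight_mul_zpow hq.2,
      integral_gamma_weight_mul_zpow (by push_cast; linarith),
      integral_gamma_weight_mul_zpow (by push_cast; linarith)]
    have := (Real.Gamma_pos_of_pos hq.1).ne'
    field_simp

theorem tendsto_ratio_of_isEquivalent {U ℓ : ℝ → ℝ} {β : ℝ}
    (hℓ : SlowlyVaryingAtTop ℓ)
    (hU_equiv : Tendsto (fun x => U x / (x ^ β * ℓ x)) atTop (𝓝 1)) {c : ℝ} (hc : 0 < c) :
    Tendsto (fun x => U (c * x) / U x) atTop (𝓝 (c ^ β)) := by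
  have hcx : Tendsto (fun x : ℝ => c * x) atTop atTop := tendsto_id.const_mul_atTop hc
  have lim := (((hU_equiv.comp hcx).div hU_equiv one_ne_zero).mul
    (hℓ.tendsto_ratio c hc)).const_mul (c ^ β)
  rw [div_one, mul_one, mul_one] at lim
  refine lim.congr' ?_
  filter_upwards [eventually_gt_atTop 0] with x hx
  have h1 := (hℓ.pos x hx).ne'
  have h2 := (hℓ.pos (c * x) (mul_pos hc hx)).ne'
  have h3 := (Real.rpow_pos_of_pos hx β).ne'
  have h4 := (Real.rpow_pos_of_pos hc β).ne'
  simp only [Function.comp_apply, Pi.div_apply]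
  rw [Real.mul_rpow hc.le hx.le]
  field_simp

/-- Domination of the weighted integrand gives integrability and a bound on the error. -/
theorem gamma_weight_integral_sub_le {q ε K : ℝ} (hq : 0 < q) {R P : ℝ → ℝ}
    (hR : AEStronglyMeasurable R (volume.restrict (Ioi (0 : ℝ))))
    (hP : IntegrableOn (fun y => y ^ (q - 1) * Real.exp (-y) * P y) (Ioi (0 : ℝ)))
    (hRP : ∀ y, 0 < y → |R y - 1| ≤ ε + K * P y) :
    IntegrableOn (fun y => y ^ (q - 1) * Real.exp (-y) * R y) (Ioi (0 : ℝ)) ∧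
    |(∫ y in Ioi (0 : ℝ), y ^ (q - 1) * Real.exp (-y) * R y) / Real.Gamma q - 1|
      ≤ ε + K * ((∫ y in Ioi (0 : ℝ), y ^ (q - 1) * Real.exp (-y) * P y) / Real.Gamma q) := by
  have hΓ := Real.Gamma_pos_of_pos hq
  have hG : IntegrableOn (fun y : ℝ => y ^ (q - 1) * Real.exp (-y)) (Ioi (0 : ℝ)) := by
    simpa using integrableOn_gamma_weight_mul_zpow (q := q) (k := 0) (by simpa using hq)
  have hGval : ∫ y in Ioi (0 : ℝ), y ^ (q - 1) * Real.exp (-y) = Real.Gamma q := by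
    simpa using integral_gamma_weight_mul_zpow (q := q) (k := 0) (by simpa using hq)
  have hdom : IntegrableOn (fun y => ε * (y ^ (q - 1) * Real.exp (-y))
      + K * (y ^ (q - 1) * Real.exp (-y) * P y)) (Ioi (0 : ℝ)) :=
    (hG.const_mul ε).add (hP.const_mul K)
  have hbound : ∀ y ∈ Ioi (0 : ℝ), ‖y ^ (q - 1) * Real.exp (-y) * (R y - 1)‖
      ≤ ε * (y ^ (q - 1) * Real.exp (-y)) + K * (y ^ (q - 1) * Real.exp (-y) * P y) := by
    intro y hy
    have hy' : 0 ≤ y ^ (q - 1) * Real.exp (-y) :=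
      mul_nonneg (Real.rpow_nonneg (le_of_lt hy) _) (Real.exp_pos _).le
    rw [Real.norm_eq_abs, abs_mul, abs_of_nonneg hy']
    calc _ ≤ y ^ (q - 1) * Real.exp (-y) * (ε + K * P y) :=
          mul_le_mul_of_nonneg_left (hRP y hy) hy'
      _ = _ := by ring
  have hae := (ae_restrict_iff' (μ := volume) measurableSet_Ioi).2 (Eventually.of_forall hbound)
  have hdiff : IntegrableOn (fun y => y ^ (q - 1) * Real.exp (-y) * (R y - 1)) (Ioi (0 : ℝ)) :=
    Integrable.mono' hdom (hG.aestronglyMeasurable.mul (hR.sub aestronglyMeasurable_const)) hae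
  have hsplit : (fun y => y ^ (q - 1) * Real.exp (-y) * R y) = fun y : ℝ =>
      y ^ (q - 1) * Real.exp (-y) * (R y - 1) + y ^ (q - 1) * Real.exp (-y) := by
    funext y; ring
  refine ⟨hsplit ▸ hdiff.add hG, ?_⟩
  rw [hsplit, integral_add hdiff hG, hGval, add_div, div_self hΓ.ne', add_sub_cancel_right,
    abs_div, abs_of_pos hΓ, div_le_iff₀ hΓ]
  refine (norm_integral_le_of_norm_le hdom hae).trans_eq ?_
  rw [integral_add (hG.const_mul ε) (hP.const_mul K), integral_const_mul, integral_const_mul,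
    hGval]
  field_simp

/-- Abelian theorem for a regularly varying `U` with diverging exponent `q(t)`. Local boundedness
is required of `x ↦ x ^ κ * U x` for some real `κ`; `κ = 0` is local boundedness of `U` itself and
`κ = -β` is local boundedness of the slowly varying factor of `U`. -/
theorem stmt_1
    (U ℓ q : ℝ → ℝ) (β κ : ℝ)
    (hU_pos : ∀ x : ℝ, 0 < x → 0 < U x)
    (hU_meas : Measurable (fun x : Ioi (0 : ℝ) => U x))
    (hU_bdd : LocallyBoundedFromZero (fun x => x ^ κ * U x))
    (hℓ : SlowlyVaryingAtTop ℓ)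
    (hU_equiv : Tendsto (fun x => U x / (x ^ β * ℓ x)) atTop (𝓝 1))
    (hq : ClassQ q) :
    (∀ᶠ t in atTop,
      IntegrableOn (fun y => y ^ (q t - 1) * Real.exp (-y) * U (t / y)) (Ioi (0 : ℝ))) ∧
    Tendsto (fun t =>
      (∫ y in Ioi (0 : ℝ), y ^ (q t - 1) * Real.exp (-y) * U (t / y)) /
        (Real.Gamma (q t) * U (t / q t))) atTop (𝓝 1) := by
  have hs : Tendsto (fun t => t / q t) atTop atTop := by
    have : Tendsto (fun t => q t / t) atTop (𝓝[>] 0) := by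
      refine tendsto_nhdsWithin_iff.2 ⟨hq.tendsto_div, ?_⟩
      filter_upwards [hq.eventually_pos, eventually_gt_atTop 0] with t h1 h2
      exact div_pos h1 h2
    refine this.inv_tendsto_nhdsGT_zero.congr fun t => ?_
    simp
  have hUt_meas : ∀ t : ℝ, 0 < t →
      AEStronglyMeasurable (fun y => U (t / y)) (volume.restrict (Ioi (0 : ℝ))) := by
    intro t ht
    have hm : Measurable fun x : ℝ => U (Real.exp x) :=
      hU_meas.comp (g := fun x : Ioi (0 : ℝ) => U x)
        (f := fun x : ℝ => (⟨Real.exp x, Real.exp_pos x⟩ : Ioi (0 : ℝ)))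
        (Real.measurable_exp.subtype_mk)
    have hm' : Measurable fun y : ℝ => U (Real.exp (Real.log (t / y))) :=
      hm.comp (g := fun x : ℝ => U (Real.exp x)) (by fun_prop)
    refine hm'.aestronglyMeasurable.congr ?_
    filter_upwards [ae_restrict_mem measurableSet_Ioi] with y hy
    rw [Real.exp_log (div_pos ht hy)]
  have main : ∀ ε : ℝ, 0 < ε → ∀ᶠ t in atTop,
      IntegrableOn (fun y => y ^ (q t - 1) * Real.exp (-y) * U (t / y)) (Ioi (0 : ℝ)) ∧
      |(∫ y in Ioi (0 : ℝ), y ^ (q t - 1) * Real.exp (-y) * U (t / y)) /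
        (Real.Gamma (q t) * U (t / q t)) - 1| < ε := by
    intro ε hε
    obtain ⟨K, N, s₀, hK⟩ := exists_abs_ratio_sub_one_le hU_pos hU_meas hU_bdd
      (fun c hc => tendsto_ratio_of_isEquivalent hℓ hU_equiv hc) (half_pos hε)
    obtain ⟨int1, lim1⟩ := gamma_weighted_second_moment (N : ℤ)
    obtain ⟨int2, lim2⟩ := gamma_weighted_second_moment (-(N : ℤ))
    have lim := (((lim1.add lim2).const_mul K).comp hq.tendsto_atTop).eventually
      (gt_mem_nhds (show K * (0 + 0) < ε / 2 by simpa using hε))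
    filter_upwards [lim, hq.tendsto_atTop.eventually int1, hq.tendsto_atTop.eventually int2,
      hq.eventually_pos, eventually_gt_atTop 0, hs.eventually_ge_atTop s₀]
      with t hlim i1 i2 hqt ht hst
    have hsum : (fun y : ℝ => y ^ (q t - 1) * Real.exp (-y) *
        ((y / q t - 1) ^ 2 * ((y / q t) ^ N + ((y / q t) ^ N)⁻¹))) = fun y =>
        y ^ (q t - 1) * Real.exp (-y) * ((y / q t - 1) ^ 2 * (y / q t) ^ (N : ℤ)) +
        y ^ (q t - 1) * Real.exp (-y) * ((y / q t - 1) ^ 2 * (y / q t) ^ (-(N : ℤ))) := by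
      funext y
      rw [zpow_neg, zpow_natCast]
      ring
    have hUs : 0 < U (t / q t) := hU_pos _ (div_pos ht hqt)
    obtain ⟨hint, herr⟩ := gamma_weight_integral_sub_le (ε := ε / 2) (K := K) hqt
      (R := fun y => U (t / y) / U (t / q t))
      (P := fun y => (y / q t - 1) ^ 2 * ((y / q t) ^ N + ((y / q t) ^ N)⁻¹))
      (by simpa only [div_eq_mul_inv] using (hUt_meas t ht).mul_const (U (t / q t))⁻¹) (hsum ▸ i1.add i2) (by
        intro y hy
        have := hK (t / q t) hst (y / q t) (div_pos hy hqt)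
        rwa [div_div_div_cancel_right₀ hqt.ne'] at this)
    rw [hsum, integral_add i1 i2, add_div] at herr
    have hfun : (fun y => y ^ (q t - 1) * Real.exp (-y) * U (t / y)) = fun y =>
        U (t / q t) * (y ^ (q t - 1) * Real.exp (-y) * (U (t / y) / U (t / q t))) := by
      funext y
      field_simp
    have hval : (∫ y in Ioi (0 : ℝ), y ^ (q t - 1) * Real.exp (-y) * U (t / y)) /
        (Real.Gamma (q t) * U (t / q t)) = (∫ y in Ioi (0 : ℝ),
          y ^ (q t - 1) * Real.exp (-y) * (U (t / y) / U (t / q t))) / Real.Gamma (q t) := by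
      rw [hfun, integral_const_mul, mul_comm (Real.Gamma _), mul_div_mul_left _ _ hUs.ne']
    refine ⟨hfun ▸ Integrable.const_mul hint _, ?_⟩
    rw [hval]
    simp only [Function.comp_apply] at hlim
    linarith
  refine ⟨(main 1 one_pos).mono fun t ht => ht.1, Metric.tendsto_nhds.2 fun ε hε => ?_⟩
  exact (main ε hε).mono fun t ht => by simpa [Real.dist_eq] using ht.2
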